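/- Let K be a compact Hausdorff space, let κ be a Kunen cardinal, and suppose there exists a continuous surjection from 2^κ onto K. Then Ba(C_p(K)) = Bo(C(K)). -/

import Mathlib

/-- The σ-algebra on `Γ × Γ` generated by all rectangles `A ×ˢ B` with `A, B ⊆ Γ`. -/
def productSigma (Γ : Type*) : MeasurableSpace (Γ × Γ) :=
  MeasurableSpace.generateFrom {S : Set (Γ × Γ) | ∃ A B : Set Γ, S = A ×ˢ B}

/-- `|Γ|` is a Kunen cardinal. -/
def IsKunen (Γ : Type*) : Prop := productSigma Γ = ⊤

/-- The Baire σ-algebra of the pointwise convergence topology on `C(K, ℝ)`. -/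
def BaCp (K : Type*) [TopologicalSpace K] : MeasurableSpace C(K, ℝ) :=
  ⨆ t : K, MeasurableSpace.comap (fun f : C(K, ℝ) => f t) Real.measurableSpace

/-!
Since the diagonal of a Kunen cardinal `ι` lies in the product σ-algebra, countably many subsets of
`ι` separate its points. This gives an injective code `ι → 2^ℕ`, whose finite prefixes cut `ι` into
finite partitions that eventually separate any given finite set; in particular `2^ι` is separable.

Let `g ∈ C(2^ι)`. For each `ε > 0` only finitely many coordinates have oscillation greater than `ε`,
and whether `A ⊆ ι` contains such a coordinate is decided by countably many point values of `g`:
none does iff, for every `δ > 0`, all cells of `A` in some prefix partition have oscillation at most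
`ε + δ`. Hence the coordinates on which `g` depends are enumerated by countably many functions of
`g` that are measurable for the σ-algebra of point evaluations. Consequently `g` is a limit of
countably many cylinder functions whose coordinates depend measurably on `g`. All subsets of a
finite power of `ι` are measurable for the product σ-algebra, so this approximation expresses the
norm-open sets as countable unions of sets in the σ-algebra of point evaluations.

The general case follows because a continuous surjection `2^ι → K` embeds `C(K)` isometrically into
`C(2^ι)`.
-/

open Set Filter MeasureTheory Topology TopologicalSpace

section DiscretePowers

variable {α β : Type*} [MeasurableSpace α] [MeasurableSpace β]

theorem discreteMeasurableSpace_of_measurable_injective [DiscreteMeasurableSpace β] {f : α → β}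
    (hf : Measurable f) (hinj : Function.Injective f) : DiscreteMeasurableSpace α where
  forall_measurableSet s := hinj.preimage_image s ▸ hf .of_discrete

theorem discreteMeasurableSpace_of_prod_self [DiscreteMeasurableSpace (α × α)] :
    DiscreteMeasurableSpace α :=
  discreteMeasurableSpace_of_measurable_injective (f := fun a : α => (a, a)) (by fun_prop)
    fun _ _ h => congrArg Prod.fst h

theorem discreteMeasurableSpace_fin_pi [Infinite α] [DiscreteMeasurableSpace (α × α)] (n : ℕ) :
    DiscreteMeasurableSpace (Fin n → α) := by
  induction n with
  | zero => infer_instance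
  | succ n ih =>
    obtain ⟨encode⟩ : Nonempty ((Fin n → α) ↪ α) := by
      rw [← Cardinal.le_def]
      simpa using Cardinal.power_nat_le (Cardinal.aleph0_le_mk α)
    refine discreteMeasurableSpace_of_measurable_injective
      (f := fun x : Fin (n + 1) → α => (x 0, encode (Fin.tail x))) ?_ fun x y hxy => ?_
    · exact (measurable_pi_apply 0).prodMk
        ((Measurable.of_discrete (f := encode)).comp
          (measurable_pi_lambda _ fun k => measurable_pi_apply k.succ))
    · rw [← Fin.cons_self_tail x, ← Fin.cons_self_tail y, (Prod.mk.inj hxy).1,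
        encode.injective (Prod.mk.inj hxy).2]

theorem discreteMeasurableSpace_pi {κ : Type*} [Finite κ] [DiscreteMeasurableSpace (α × α)] :
    DiscreteMeasurableSpace (κ → α) := by
  have := discreteMeasurableSpace_of_prod_self (α := α)
  obtain hfin | hinf := finite_or_infinite α
  · infer_instance
  · have := discreteMeasurableSpace_fin_pi (α := α) (Nat.card κ)
    refine discreteMeasurableSpace_of_measurable_injective
      (f := fun x : κ → α => x ∘ (Finite.equivFin κ).symm) ?_
      (Finite.equivFin κ).symm.surjective.injective_comp_right
    exact measurable_pi_lambda _ fun k => measurable_pi_apply _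

theorem IsKunen.discreteMeasurableSpace_prod [DiscreteMeasurableSpace α] (h : IsKunen α) :
    DiscreteMeasurableSpace (α × α) where
  forall_measurableSet S := by
    have hrect : productSigma α ≤ Prod.instMeasurableSpace := by
      refine MeasurableSpace.generateFrom_le ?_
      rintro _ ⟨A, B, rfl⟩
      exact MeasurableSet.of_discrete.prod .of_discrete
    rw [IsKunen] at h
    exact hrect S (h ▸ trivial)

end DiscretePowers

section CountableSeparation

variable {α β : Type*} [MeasurableSpace α] [MeasurableSpace β]

theorem exists_seq_determining_sections {S : Set (α × β)} (hS : MeasurableSet S) :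
    ∃ A : ℕ → Set α, (∀ n, MeasurableSet (A n)) ∧
      ∀ a a', (∀ n, a ∈ A n ↔ a' ∈ A n) → ∀ b, (a, b) ∈ S ↔ (a', b) ∈ S := by
  rw [← generateFrom_prod] at hS
  induction S, hS using MeasurableSpace.generateFrom_induction with
  | hC S hS _ =>
    obtain ⟨A, hA, B, -, rfl⟩ := hS
    exact ⟨fun _ => A, fun _ => hA, fun a a' h b => and_congr (h 0) Iff.rfl⟩
  | empty => exact ⟨fun _ => ∅, fun _ => .empty, by simp⟩
  | compl S _ ih =>
    obtain ⟨A, hAm, hA⟩ := ih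
    exact ⟨A, hAm, fun a a' h b => not_congr (hA a a' h b)⟩
  | iUnion S _ ih =>
    choose A hAm hA using ih
    refine ⟨fun n => A n.unpair.1 n.unpair.2, fun n => hAm _ _, fun a a' h b => ?_⟩
    simp only [mem_iUnion]
    exact exists_congr fun n => hA n a a' (fun m => by simpa using h (Nat.pair n m)) b

theorem countablySeparated_of_measurableEq [MeasurableEq α] :
    MeasurableSpace.CountablySeparated α := by
  obtain ⟨A, hAm, hA⟩ := exists_seq_determining_sections (measurableSet_diagonal (α := α))
  refine ⟨range A, countable_range A, by simpa using hAm, fun a _ a' _ h => ?_⟩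
  exact (hA a a' (by simpa using h) a').2 rfl

end CountableSeparation

section BinaryPrefix

variable {ι : Type*}

/-- The first `n` digits of the code `e i` of `i`. The fibres of `binaryPrefix e n` form the `n`-th
of a refining sequence of finite partitions of `ι`. -/
def binaryPrefix (e : ι → ℕ → Bool) (n : ℕ) (i : ι) : Fin n → Bool := fun k => e i k

variable {e : ι → ℕ → Bool}

theorem measurable_binaryPrefix [MeasurableSpace ι] (he : Measurable e) (n : ℕ) :
    Measurable (binaryPrefix e n) :=
  measurable_pi_lambda _ fun k => (measurable_pi_apply (k : ℕ)).comp he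

theorem exists_injOn_binaryPrefix (he : Function.Injective e) {F : Set ι} (hF : F.Finite) :
    ∃ n, InjOn (binaryPrefix e n) F := by
  have hpair : ∀ i j, ∀ᶠ n in atTop, binaryPrefix e n i = binaryPrefix e n j → i = j := by
    intro i j
    by_cases hij : i = j
    · exact .of_forall fun _ _ => hij
    · obtain ⟨k, hk⟩ := Function.ne_iff.1 (he.ne hij)
      filter_upwards [eventually_gt_atTop k] with n hn h
      exact absurd (congrFun h ⟨k, hn⟩) hk
  have hall : ∀ᶠ n in atTop, ∀ i ∈ F, ∀ j ∈ F, binaryPrefix e n i = binaryPrefix e n j → i = j :=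
    hF.eventually_all.2 fun i _ => hF.eventually_all.2 fun j _ => hpair i j
  obtain ⟨n, hn⟩ := hall.exists
  exact ⟨n, fun i hi j hj => hn i hi j hj⟩

theorem subsingleton_iff_forall_digit (he : Function.Injective e) {s : Set ι} :
    s.Subsingleton ↔ ∀ k, ¬ (s ∩ {i | e i k = true}).Nonempty ∨
      ¬ (s ∩ {i | e i k = false}).Nonempty := by
  constructor
  · intro hs k
    by_contra! hk
    obtain ⟨⟨i, hi, hik⟩, j, hj, hjk⟩ := hk
    simp_all [hs hi hj]
  · intro h i hi j hj
    refine he (funext fun k => ?_)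
    obtain hk | hk := h k <;> simp only [Set.Nonempty, mem_inter_iff, not_exists, not_and] at hk
    · exact (Bool.eq_false_of_not_eq_true (hk i hi)).trans
        (Bool.eq_false_of_not_eq_true (hk j hj)).symm
    · exact (Bool.eq_true_of_not_eq_false (hk i hi)).trans
        (Bool.eq_true_of_not_eq_false (hk j hj)).symm

theorem separableSpace_pi_of_injective {β : Type*} [TopologicalSpace β] [SeparableSpace β]
    [Nonempty β] (he : Function.Injective e) : SeparableSpace (ι → β) := by
  refine .of_denseRange (fun c : Σ n, ((Fin n → Bool) → ℕ) =>
    fun i => denseSeq β (c.2 (binaryPrefix e c.1 i))) fun x => mem_closure_iff.2 fun U hU hx => ?_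
  obtain ⟨F, u, hu, hFU⟩ := isOpen_pi_iff.1 hU x hx
  obtain ⟨n, hn⟩ := exists_injOn_binaryPrefix he F.finite_toSet
  have happrox (i : F) : ∃ m, denseSeq β m ∈ u i :=
    (denseRange_denseSeq β).exists_mem_open (hu i i.2).1 ⟨x i, (hu i i.2).2⟩
  choose m hm using happrox
  obtain ⟨v, hv⟩ : ∃ v : (Fin n → Bool) → ℕ, ∀ i : F, v (binaryPrefix e n i) = m i :=
    ⟨_, (injOn_iff_injective.1 hn).extend_apply m 0⟩
  refine ⟨_, hFU fun i hi => ?_, ⟨n, v⟩, rfl⟩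
  simpa only [hv ⟨i, hi⟩] using hm ⟨i, hi⟩

end BinaryPrefix

section Oscillation

variable {ι β M : Type*} [PseudoMetricSpace M]

/-- The oscillation of `g` along the coordinates in `A` is at most `ε`: two points that differ only
at coordinates in `A` have values at distance at most `ε`. Hence `OscillationLE Fᶜ ε g` says that
the coordinates in `F` determine `g` up to `ε`. -/
def OscillationLE (A : Set ι) (ε : ℝ) (g : (ι → β) → M) : Prop :=
  ∀ ⦃x y : ι → β⦄, EqOn x y Aᶜ → dist (g x) (g y) ≤ ε

variable {A B : Set ι} {ε δ : ℝ} {g : (ι → β) → M}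

theorem OscillationLE.mono (h : OscillationLE A ε g) (hBA : B ⊆ A) (hεδ : ε ≤ δ) :
    OscillationLE B δ g :=
  fun _ _ hxy => (h (hxy.mono (compl_subset_compl.2 hBA))).trans hεδ

theorem oscillationLE_empty (hε : 0 ≤ ε) : OscillationLE ∅ ε g := by
  intro x y hxy
  obtain rfl : x = y := by simpa using hxy
  simpa using hε

theorem oscillationLE_iff_forall_piecewise [∀ i, Decidable (i ∈ A)] :
    OscillationLE A ε g ↔ ∀ x y, dist (g (A.piecewise x y)) (g y) ≤ ε := by
  refine ⟨fun h x y => h (piecewise_eqOn_compl A x y), fun h x y hxy => ?_⟩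
  have hx : A.piecewise x y = x := by
    ext i
    by_cases hi : i ∈ A
    · simp [hi]
    · simp [hi, hxy hi]
  exact hx ▸ h x y

theorem OscillationLE.union (hA : OscillationLE A ε g) (hB : OscillationLE B δ g) :
    OscillationLE (A ∪ B) (ε + δ) g := by
  classical
  intro x y hxy
  have hxz : EqOn x (A.piecewise y x) Aᶜ := (piecewise_eqOn_compl A y x).symm
  have hzy : EqOn (A.piecewise y x) y Bᶜ := by
    intro i hi
    by_cases hiA : i ∈ A
    · simp [hiA]
    · simpa [hiA] using hxy (by simp [hiA, hi] : i ∈ (A ∪ B)ᶜ)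
  exact (dist_triangle _ _ _).trans (add_le_add (hA hxz) (hB hzy))

theorem oscillationLE_zero_of_finite (hA : A.Finite) (h : ∀ i ∈ A, OscillationLE {i} 0 g) :
    OscillationLE A 0 g := by
  induction A, hA using Set.Finite.induction_on with
  | empty => exact oscillationLE_empty le_rfl
  | insert _ _ ih =>
    have hunion := (h _ (mem_insert _ _)).union (ih fun i hi => h i (mem_insert_of_mem _ hi))
    simpa using hunion

theorem oscillationLE_add_of_subsingleton {F : Set ι} (hF : OscillationLE Fᶜ δ g) (hε : 0 ≤ ε)
    (hA : ∀ i ∈ A, OscillationLE {i} ε g) (hAF : (A ∩ F).Subsingleton) :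
    OscillationLE A (ε + δ) g := by
  have hinter : OscillationLE (A ∩ F) ε g := by
    obtain hempty | ⟨i, hi⟩ := hAF.eq_empty_or_singleton
    · exact hempty ▸ oscillationLE_empty hε
    · exact hi ▸ hA i (hi ▸ mem_singleton i : i ∈ A ∩ F).1
  refine (hinter.union hF).mono (fun i hi => ?_) le_rfl
  by_cases hiF : i ∈ F
  exacts [.inl ⟨hi, hiF⟩, .inr hiF]

theorem exists_finset_oscillationLE_compl [UniformSpace β] [CompactSpace β] (hg : Continuous g)
    (hε : 0 < ε) : ∃ F : Finset ι, OscillationLE (F : Set ι)ᶜ ε g := by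
  have hunif := CompactSpace.uniformContinuous_of_continuous hg (Metric.dist_mem_uniformity hε)
  rw [Filter.mem_map, Pi.uniformity, Filter.mem_iInf_finite] at hunif
  obtain ⟨F, hF⟩ := hunif
  refine ⟨F, fun x y hxy => le_of_lt ?_⟩
  have hmem : pure (x, y) ≤
      ⨅ i ∈ F, comap (fun p : (ι → β) × (ι → β) => (p.1 i, p.2 i)) (uniformity β) := by
    refine le_iInf₂ fun i hi => tendsto_iff_comap.1 ?_
    refine tendsto_pure_left.2 fun s hs => ?_
    have hxyi : x i = y i := hxy (by simpa using hi)
    simpa only [hxyi] using refl_mem_uniformity hs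
  exact hmem hF

theorem finite_setOf_not_oscillationLE_singleton [UniformSpace β] [CompactSpace β]
    (hg : Continuous g) (hε : 0 < ε) : {i | ¬ OscillationLE {i} ε g}.Finite := by
  obtain ⟨F, hF⟩ := exists_finset_oscillationLE_compl hg hε
  refine F.finite_toSet.subset fun i hi => ?_
  by_contra hiF
  exact hi (hF.mono (by simpa using hiF) le_rfl)

theorem oscillationLE_of_forall_add_one_div
    (h : ∀ n : ℕ, OscillationLE A (ε + 1 / (n + 1 : ℝ)) g) : OscillationLE A ε g := by
  refine fun x y hxy => le_of_forall_pos_le_add fun δ hδ => ?_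
  obtain ⟨n, hn⟩ := exists_nat_one_div_lt hδ
  exact (h n hxy).trans (by gcongr)

theorem exists_finset_oscillationLE_compl_of_subset [UniformSpace β] [CompactSpace β]
    (hg : Continuous g) {J : Set ι} (hJ : ∀ i ∉ J, OscillationLE {i} 0 g) (hε : 0 < ε) :
    ∃ F : Finset ι, (F : Set ι) ⊆ J ∧ OscillationLE (F : Set ι)ᶜ ε g := by
  classical
  obtain ⟨F, hF⟩ := exists_finset_oscillationLE_compl hg hε
  have hzero : OscillationLE (F \ J) 0 g :=
    oscillationLE_zero_of_finite (F.finite_toSet.subset sdiff_subset) fun i hi => hJ i hi.2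
  refine ⟨F.filter (· ∈ J), fun i hi => (Finset.mem_filter.1 hi).2,
    (hzero.union hF).mono ?_ (zero_add ε).le⟩
  intro i hi
  by_cases hiF : i ∈ F <;> simp_all

theorem forall_oscillationLE_singleton_iff [UniformSpace β] [CompactSpace β] (hg : Continuous g)
    {e : ι → ℕ → Bool} (he : Function.Injective e) (hε : 0 ≤ ε) :
    (∀ i ∈ A, OscillationLE {i} ε g) ↔ ∀ m : ℕ, ∃ n, ∀ a : Fin n → Bool,
      OscillationLE (A ∩ binaryPrefix e n ⁻¹' {a}) (ε + 1 / (m + 1 : ℝ)) g := by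
  constructor
  · intro h m
    obtain ⟨F, hF⟩ := exists_finset_oscillationLE_compl hg (Nat.one_div_pos_of_nat (n := m))
    obtain ⟨n, hn⟩ := exists_injOn_binaryPrefix he F.finite_toSet
    refine ⟨n, fun a => oscillationLE_add_of_subsingleton hF hε (fun i hi => h i hi.1) ?_⟩
    rintro i ⟨⟨-, hi⟩, hiF⟩ j ⟨⟨-, hj⟩, hjF⟩
    exact hn hiF hjF (hi.trans hj.symm)
  · refine fun h i hi => oscillationLE_of_forall_add_one_div fun m => ?_
    obtain ⟨n, hn⟩ := h m
    have hcell : {i} ⊆ A ∩ binaryPrefix e n ⁻¹' {binaryPrefix e n i} := by simpa using hi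
    exact (hn _).mono hcell le_rfl

end Oscillation

section Measurability

variable {X Y : Type*} [MeasurableSpace X]

theorem measurableSet_setOf_forall_le [TopologicalSpace Y] [SeparableSpace Y] {h : X → Y → ℝ}
    (hcont : ∀ x, Continuous (h x)) (hmeas : ∀ y, Measurable fun x => h x y) (r : ℝ) :
    MeasurableSet {x | ∀ y, h x y ≤ r} := by
  obtain ⟨D, hDc, hD⟩ := exists_countable_dense Y
  have hdense : {x | ∀ y, h x y ≤ r} = ⋂ y ∈ D, {x | h x y ≤ r} := by
    ext x
    simp only [mem_iInter, mem_ofPred_eq]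
    refine ⟨fun hx y _ => hx y, fun hx y => ?_⟩
    exact (isClosed_le (hcont x) continuous_const).closure_subset_iff.2 hx (hD y)
  rw [hdense]
  exact .biInter hDc fun y _ => measurableSet_le (hmeas y) measurable_const

variable {M : Type*} [PseudoMetricSpace M] [SecondCountableTopology M] [MeasurableSpace M]
  [OpensMeasurableSpace M]

theorem measurable_dist_of_eval [TopologicalSpace Y] [CompactSpace Y] [SeparableSpace Y]
    {T S : X → C(Y, M)} (hT : ∀ y, Measurable fun x => T x y)
    (hS : ∀ y, Measurable fun x => S x y) : Measurable fun x => dist (T x) (S x) := by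
  refine measurable_of_Iic fun r => ?_
  by_cases hr : 0 ≤ r
  · simpa only [preimage, mem_Iic, ContinuousMap.dist_le hr] using
      measurableSet_setOf_forall_le (fun x => by fun_prop) (fun y => (hT y).dist (hS y)) r
  · convert MeasurableSet.empty (α := X)
    ext x
    simpa using (not_le.1 hr).trans_le dist_nonneg

theorem measurableSet_setOf_oscillationLE {ι β : Type*} [TopologicalSpace β]
    [SeparableSpace (ι → β)] {T : X → C(ι → β, M)} (hT : ∀ y, Measurable fun x => T x y)
    (A : Set ι) (ε : ℝ) : MeasurableSet {x | OscillationLE A ε (T x)} := by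
  classical
  have hpiecewise : Continuous fun p : (ι → β) × (ι → β) => A.piecewise p.1 p.2 := by
    refine continuous_pi fun i => ?_
    by_cases hi : i ∈ A
    · simpa only [piecewise_eq_of_mem _ _ _ hi] using by fun_prop
    · simpa only [piecewise_eq_of_notMem _ _ _ hi] using by fun_prop
  have := measurableSet_setOf_forall_le
    (h := fun x (p : (ι → β) × (ι → β)) => dist (T x (A.piecewise p.1 p.2)) (T x p.2))
    (fun x => by fun_prop) (fun p => (hT _).dist (hT _)) ε
  simpa only [oscillationLE_iff_forall_piecewise, Prod.forall] using this

theorem measurableSet_setOf_inter_not_oscillationLE_nonempty {ι β : Type*} [UniformSpace β]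
    [CompactSpace β] [SeparableSpace (ι → β)] {e : ι → ℕ → Bool} (he : Function.Injective e)
    {T : X → C(ι → β, M)} (hT : ∀ y, Measurable fun x => T x y) (A : Set ι) {ε : ℝ} (hε : 0 ≤ ε) :
    MeasurableSet {x | ({i | ¬ OscillationLE {i} ε (T x)} ∩ A).Nonempty} := by
  have hcompl : {x | ({i | ¬ OscillationLE {i} ε (T x)} ∩ A).Nonempty} =
      {x | ∀ i ∈ A, OscillationLE {i} ε (T x)}ᶜ := by
    ext x
    simp [Set.Nonempty, and_comm]
  simp only [hcompl, forall_oscillationLE_singleton_iff (T _).continuous he hε, ofPred_forall,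
    ofPred_exists]
  exact (MeasurableSet.iInter fun m => .iUnion fun n => .iInter fun a =>
    measurableSet_setOf_oscillationLE hT _ _).compl

end Measurability

section Selectors

variable {ι X : Type*} [MeasurableSpace ι] [MeasurableSpace X] {e : ι → ℕ → Bool} {S : X → Set ι}

theorem measurableSet_setOf_inter_eq_singleton (hem : Measurable e) (he : Function.Injective e)
    (hS : ∀ A, MeasurableSet A → MeasurableSet {x | (S x ∩ A).Nonempty}) {C : Set ι}
    (hC : MeasurableSet C) : MeasurableSet {x | ∃ i, S x ∩ C = {i}} := by
  have hdigit (k : ℕ) (b : Bool) : MeasurableSet {i | e i k = b} :=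
    (measurable_pi_apply k).comp hem (measurableSet_singleton b)
  simp only [exists_eq_singleton_iff_nonempty_subsingleton,
    subsingleton_iff_forall_digit he, inter_assoc, ofPred_and, ofPred_forall]
  exact (hS C hC).inter <| .iInter fun k =>
    (hS _ (hC.inter (hdigit k true))).compl.union (hS _ (hC.inter (hdigit k false))).compl

theorem exists_measurable_eq_of_inter_eq_singleton [Nonempty ι] (hem : Measurable e)
    (he : Function.Injective e)
    (hS : ∀ A, MeasurableSet A → MeasurableSet {x | (S x ∩ A).Nonempty}) {C : Set ι}
    (hC : MeasurableSet C) :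
    ∃ t : X → ι, Measurable t ∧ ∀ x i, S x ∩ C = {i} → t x = i := by
  classical
  let i₀ := Classical.arbitrary ι
  let E := {x | ∃ i, S x ∩ C = {i}}
  have hE : MeasurableSet E := measurableSet_setOf_inter_eq_singleton hem he hS hC
  let t : X → ι := fun x => if h : ∃ i, S x ∩ C = {i} then h.choose else i₀
  have ht {x : X} {i : ι} (hi : S x ∩ C = {i}) : t x = i := by
    have hex : ∃ i, S x ∩ C = {i} := ⟨i, hi⟩
    simpa [t, hex] using singleton_injective (hex.choose_spec.symm.trans hi)
  have htE {x : X} (hx : x ∉ E) : t x = i₀ := dif_neg hx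
  refine ⟨t, fun A hA => ?_, fun x i => ht⟩
  have hpre : t ⁻¹' A = E.ite {x | (S x ∩ (C ∩ A)).Nonempty} {_x | i₀ ∈ A} := by
    ext x
    by_cases hx : x ∈ E
    · obtain ⟨i, hi⟩ := id hx
      simp [Set.ite, hx, ht hi, ← inter_assoc, hi]
    · simp [Set.ite, hx, htE hx]
  rw [hpre]
  exact hE.ite (hS _ (hC.inter hA)) (.const _)

theorem exists_countable_measurable_selectors (hem : Measurable e) (he : Function.Injective e)
    (hfin : ∀ x, (S x).Finite)
    (hS : ∀ A, MeasurableSet A → MeasurableSet {x | (S x ∩ A).Nonempty}) :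
    ∃ 𝒯 : Set (X → ι), 𝒯.Countable ∧ (∀ t ∈ 𝒯, Measurable t) ∧
      ∀ x, ∀ i ∈ S x, ∃ t ∈ 𝒯, t x = i := by
  obtain hι | hι := isEmpty_or_nonempty ι
  · exact ⟨∅, countable_empty, by simp, fun x i => isEmptyElim i⟩
  have hselect (c : Σ n, (Fin n → Bool)) := exists_measurable_eq_of_inter_eq_singleton hem he hS
    (measurable_binaryPrefix hem c.1 (measurableSet_singleton c.2))
  choose t htm ht using hselect
  refine ⟨range t, countable_range t, forall_mem_range.2 htm, fun x i hi => ?_⟩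
  obtain ⟨n, hn⟩ := exists_injOn_binaryPrefix he (hfin x)
  refine ⟨_, mem_range_self ⟨n, binaryPrefix e n i⟩, ht _ x i ?_⟩
  ext j
  exact ⟨fun hj => hn hj.1 hi hj.2, by rintro rfl; exact ⟨hi, rfl⟩⟩

end Selectors

section Cylinder

variable {ι κ M : Type*} [Finite κ]

/-- The function `x ↦ v (x ∘ c)`, which reads only the finitely many coordinates listed by `c`. -/
def cylinderMap [TopologicalSpace M] (c : κ → ι) (v : (κ → Bool) → M) : C(ι → Bool, M) where
  toFun x := v (x ∘ c)
  continuous_toFun := continuous_of_discreteTopology.comp (by fun_prop)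

theorem exists_dist_cylinderMap_le [PseudoMetricSpace M] {D : Set M} (hD : Dense D)
    (g : C(ι → Bool, M)) (c : κ → ι) {ε : ℝ} (hε : 0 < ε) (hc : OscillationLE (range c)ᶜ ε g) :
    ∃ v : (κ → Bool) → D, dist g (cylinderMap c fun a => v a) ≤ ε + ε := by
  let extension (a : κ → Bool) : ι → Bool := Function.extend c a fun _ => false
  have hextension (x : ι → Bool) : EqOn x (extension (x ∘ c)) (range c) := by
    rintro _ ⟨k, rfl⟩
    have hfactors : Function.FactorsThrough (x ∘ c) c := fun _ _ h => congrArg x h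
    exact (hfactors.extend_apply _ k).symm
  have happrox (a : κ → Bool) : ∃ d : D, dist (g (extension a)) d < ε := by
    obtain ⟨d, hdD, hd⟩ := hD.exists_dist_lt (g (extension a)) hε
    exact ⟨⟨d, hdD⟩, hd⟩
  choose v hv using happrox
  refine ⟨v, (ContinuousMap.dist_le (by positivity)).2 fun x => ?_⟩
  calc dist (g x) (v (x ∘ c))
      ≤ dist (g x) (g (extension (x ∘ c))) + dist (g (extension (x ∘ c))) (v (x ∘ c)) :=
        dist_triangle _ _ _
    _ ≤ ε + ε := add_le_add (hc (by simpa using hextension x)) (hv _).le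

theorem mem_closure_range_cylinderMap {X : Type*} [PseudoMetricSpace M] {𝒯 : Set (X → ι)} {x : X}
    {D : Set M} (hD : Dense D)
    {g : C(ι → Bool, M)} (h𝒯 : ∀ i, ¬ OscillationLE {i} 0 g → ∃ t ∈ 𝒯, t x = i) :
    g ∈ closure (range fun k : Σ s : Finset 𝒯, ((s → Bool) → D) =>
      cylinderMap (fun t : k.1 => t.1.1 x) fun a => (k.2 a : M)) := by
  classical
  refine Metric.mem_closure_iff.2 fun ε hε => ?_
  obtain ⟨F, hF𝒯, hF⟩ := exists_finset_oscillationLE_compl_of_subset g.continuous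
    (J := range fun t : 𝒯 => t.1 x) (fun i hi => not_not.1 fun h => hi (by simpa using h𝒯 i h))
    (by positivity : 0 < ε / 3)
  obtain ⟨s, -, rfl⟩ := Finset.subset_set_image_iff.1 (image_univ.symm ▸ hF𝒯)
  have hs : range (fun t : s => t.1.1 x) = (s.image fun t => t.1 x : Finset ι) := by
    ext i; simp
  obtain ⟨v, hv⟩ := exists_dist_cylinderMap_le hD g (fun t : s => t.1.1 x) (by positivity)
    (hs.symm ▸ hF)
  exact ⟨_, ⟨⟨s, v⟩, rfl⟩, hv.trans_lt (by linarith)⟩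

end Cylinder

section MeasurableOfEval

variable {ι X : Type*} [MeasurableSpace X]

theorem measurableSet_preimage_of_mem_closure_range {κ E : Type*} [Countable κ]
    [PseudoMetricSpace E] {T : X → E} {G : κ → X → E}
    (hG : ∀ k s, MeasurableSet (G k ⁻¹' s)) (hdist : ∀ k, Measurable fun x => dist (T x) (G k x))
    (hT : ∀ x, T x ∈ closure (range fun k => G k x)) {U : Set E} (hU : IsOpen U) :
    MeasurableSet (T ⁻¹' U) := by
  have hcover : T ⁻¹' U = ⋃ (k : κ) (n : ℕ), G k ⁻¹' {p | Metric.closedBall p (1 / (n + 1)) ⊆ U} ∩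
      {x | dist (T x) (G k x) ≤ 1 / (n + 1)} := by
    ext x
    simp only [mem_iUnion]
    refine ⟨fun hx => ?_, fun ⟨_, _, hball, hk⟩ => hball hk⟩
    obtain ⟨ε, hε, hεU⟩ := Metric.isOpen_iff.1 hU _ hx
    obtain ⟨n, hn⟩ := exists_nat_one_div_lt (half_pos hε)
    obtain ⟨_, ⟨k, rfl⟩, hk⟩ := Metric.mem_closure_iff.1 (hT x) _ (Nat.one_div_pos_of_nat (n := n))
    refine ⟨k, n, fun p hp => hεU ?_, hk.le⟩
    calc dist p (T x) ≤ dist p (G k x) + dist (T x) (G k x) := dist_triangle_right _ _ _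
      _ < ε / 2 + ε / 2 := add_lt_add (hp.trans_lt hn) (hk.trans hn)
      _ = ε := add_halves ε
  rw [hcover]
  exact .iUnion fun k => .iUnion fun n =>
    (hG k _).inter (measurableSet_le (hdist k) measurable_const)

variable {M : Type*} [PseudoMetricSpace M] [SecondCountableTopology M] [MeasurableSpace M]
  [OpensMeasurableSpace M] [MeasurableSpace ι]

theorem exists_countable_measurable_essential_coordinates {T : X → C(ι → Bool, M)}
    (hT : ∀ y, Measurable fun x => T x y) {e : ι → ℕ → Bool} (hem : Measurable e)
    (he : Function.Injective e) :
    ∃ 𝒯 : Set (X → ι), 𝒯.Countable ∧ (∀ t ∈ 𝒯, Measurable t) ∧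
      ∀ x i, ¬ OscillationLE {i} 0 (T x) → ∃ t ∈ 𝒯, t x = i := by
  have := separableSpace_pi_of_injective (β := Bool) he
  have hselect (n : ℕ) := exists_countable_measurable_selectors hem he
    (fun x => finite_setOf_not_oscillationLE_singleton (T x).continuous
      (Nat.one_div_pos_of_nat (α := ℝ) (n := n)))
    (fun A _ => measurableSet_setOf_inter_not_oscillationLE_nonempty he hT A
      (Nat.one_div_pos_of_nat (n := n)).le)
  choose 𝒯 hcount hmeas hcover using hselect
  refine ⟨⋃ n, 𝒯 n, countable_iUnion hcount, ?_, fun x i hi => ?_⟩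
  · simpa only [mem_iUnion, forall_exists_index] using fun t n => hmeas n t
  · obtain ⟨n, hn⟩ : ∃ n : ℕ, ¬ OscillationLE {i} (1 / (n + 1 : ℝ)) (T x) := by
      contrapose! hi
      exact oscillationLE_of_forall_add_one_div (by simpa using hi)
    obtain ⟨t, ht, htx⟩ := hcover n x i hn
    exact ⟨t, mem_iUnion_of_mem n ht, htx⟩

theorem measurable_of_measurable_eval [DiscreteMeasurableSpace (ι × ι)]
    [MeasurableSpace C(ι → Bool, M)] [BorelSpace C(ι → Bool, M)] {T : X → C(ι → Bool, M)}
    (hT : ∀ y, Measurable fun x => T x y) : Measurable T := by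
  have := discreteMeasurableSpace_of_prod_self (α := ι)
  have : MeasurableEq ι := ⟨.of_discrete⟩
  have := countablySeparated_of_measurableEq (α := ι)
  obtain ⟨e, hem, he⟩ := MeasurableSpace.measurable_injection_nat_bool_of_countablySeparated ι
  have := separableSpace_pi_of_injective (β := Bool) he
  obtain ⟨𝒯, h𝒯c, h𝒯m, h𝒯⟩ := exists_countable_measurable_essential_coordinates hT hem he
  obtain ⟨D, hDc, hD⟩ := exists_countable_dense M
  have := h𝒯c.to_subtype
  have := hDc.to_subtype
  refine measurable_of_isOpen fun U hU => measurableSet_preimage_of_mem_closure_range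
    (fun k P => ?_) (fun k => measurable_dist_of_eval hT fun y => ?_)
    (fun x => mem_closure_range_cylinderMap hD (h𝒯 x)) hU
  all_goals
    have := discreteMeasurableSpace_pi (α := ι) (κ := k.1)
    have htuple : Measurable fun x (t : k.1) => t.1.1 x :=
      measurable_pi_lambda _ fun t => h𝒯m _ t.1.2
  · exact htuple (.of_discrete (s := {c | cylinderMap c (fun a => (k.2 a : M)) ∈ P}))
  · exact (Measurable.of_discrete (f := fun c : k.1 → ι => (k.2 (y ∘ c) : M))).comp htuple

end MeasurableOfEval

theorem isometry_comp_of_surjective {Y K M : Type*} [TopologicalSpace Y] [CompactSpace Y]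
    [TopologicalSpace K] [CompactSpace K] [PseudoMetricSpace M] {q : C(Y, K)}
    (hq : Function.Surjective q) : Isometry fun f : C(K, M) => f.comp q := by
  refine Isometry.of_dist_eq fun f g => eq_of_forall_ge_iff fun r => ?_
  by_cases hr : 0 ≤ r
  · simp [ContinuousMap.dist_le hr, hq.forall]
  · exact iff_of_false (fun h => hr (dist_nonneg.trans h)) fun h => hr (dist_nonneg.trans h)

theorem iSup_comap_eval_le_borel {K M : Type*} [TopologicalSpace K] [TopologicalSpace M]
    [MeasurableSpace M] [BorelSpace M] :
    ⨆ t : K, MeasurableSpace.comap (fun f : C(K, M) => f t) ‹_› ≤ borel C(K, M) := by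
  borelize C(K, M)
  exact iSup_le fun t => (continuous_eval_const t).measurable.comap_le

theorem stmt2_general {ι K M : Type*} [TopologicalSpace K] [PseudoMetricSpace M]
    [SecondCountableTopology M] [MeasurableSpace M] [BorelSpace M] (hκ : IsKunen ι)
    {q : C(ι → Bool, K)} (hq : Function.Surjective q) :
    ⨆ t : K, MeasurableSpace.comap (fun f : C(K, M) => f t) ‹_› = borel C(K, M) := by
  have : CompactSpace K := hq.compactSpace q.continuous
  refine iSup_comap_eval_le_borel.antisymm ?_
  let _ : MeasurableSpace ι := ⊤
  have := hκ.discreteMeasurableSpace_prod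
  let _ : MeasurableSpace C(K, M) := ⨆ t : K, MeasurableSpace.comap (fun f : C(K, M) => f t) ‹_›
  have heval (t : K) : Measurable fun f : C(K, M) => f t :=
    .of_comap_le (le_iSup_iff.2 fun _ h => h t)
  borelize C(ι → Bool, M)
  have hcomp : Measurable fun f : C(K, M) => f.comp q :=
    measurable_of_measurable_eval fun y => heval (q y)
  refine MeasurableSpace.generateFrom_le fun U hU => ?_
  have hinducing := (isometry_comp_of_surjective (M := M) hq).isUniformInducing.isInducing
  obtain ⟨V, hV, rfl⟩ := hinducing.isOpen_iff.1 hU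
  exact hcomp hV.measurableSet

/-- If `K` is compact Hausdorff, `κ = |ι|` is a Kunen cardinal and there is a continuous
surjection from `2^κ` onto `K`, then `Ba(C_p(K)) = Bo(C(K))`. -/
theorem stmt2 (ι : Type*) (K : Type*) [TopologicalSpace K] [CompactSpace K] [T2Space K]
    (hκ : IsKunen ι) (hsurj : ∃ q : C(ι → Bool, K), Function.Surjective q) :
    BaCp K = borel C(K, ℝ) :=
  let ⟨_, hq⟩ := hsurj
  stmt2_general hκ hq
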